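/- Let $(\Omega,\mathcal F,\mathbb P,\theta)$ be an invertible probability-preserving system with $\theta$ mixing. Let $\mathcal X$ be a measurable space, $(\mathcal X_\omega)_{\omega\in\Omega}$ subsets of $\mathcal X$ depending measurably on $\omega$, and $P_\omega(x,\Gamma)$ transition probabilities from $\mathcal X_\omega$ to $\mathcal X_{\theta\omega}$, measurable in $\omega$; set $P_{\omega,n}=P_\omega\circ P_{\theta\omega}\circ\cdots\circ P_{\theta^{n-1}\omega}$ (the first step is made with $P_\omega$). Assume that there are random variables $n_\omega\in\mathbb N$, $\gamma_\omega\in(0,1)$ and probability measures $m_\omega$ on $\mathcal X_\omega$ such that, $\mathbb P$-a.s., for all $x\in\mathcal X_{\theta^{-n_\omega}\omega}$ and all measurable $\Gamma\subseteq\mathcal X_\omega$, $$P_{\theta^{-n_\omega}\omega,\,n_\omega}(x,\Gamma)\ \ge\ \gamma_\omega\, m_\omega(\Gamma).$$ Let $\delta>0$ and let $M\ge 1$ be an integer with $\mathbb P(A_{\delta,M})>0$, where $A_{\delta,M}=\{\omega:\gamma_\omega\ge\delta,\ n_\omega\le M\}$. Then for $\mathbb P$-a.e. $\omega$ there is a probability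 measure $\mu_\omega$ on $\mathcal X_\omega$ such that for all $n$, $$\sup_{\Gamma\subseteq\mathcal X_\omega\text{ measurable}}\ \sup_{x\in\mathcal X_{\theta^{-n}\omega}}\bigl|P_{\theta^{-n}\omega,n}(x,\Gamma)-\mu_\omega(\Gamma)\bigr|\ \le\ (1-\delta)^{\sum_{j=1}^{\lfloor n/M\rfloor-1}\mathbf 1_{A_{\delta,M}}(\theta^{-jM}\omega)},$$ where an empty sum is $0$. -/

import Mathlib

open MeasureTheory ProbabilityTheory Filter

/-- The `n`-step transition kernels `P_{ω,n} = P_ω ∘ P_{θω} ∘ ⋯ ∘ P_{θ^{n-1}ω}` of a Markov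
chain in the random environment `ω`: the first step is made with `P_ω`, the next one with
`P_{θω}`, and so on. (Mathlib's `η ∘ₖ κ` applies `κ` first.) -/
noncomputable def envKernel {Ω 𝒳 : Type*} [MeasurableSpace 𝒳]
    (θ : Ω → Ω) (P : Ω → Kernel 𝒳 𝒳) : ℕ → Ω → Kernel 𝒳 𝒳
  | 0, _ => Kernel.id
  | n + 1, ω => (envKernel θ P n (θ ω)) ∘ₖ (P ω)

/-- Mixing of the map `θ` with respect to `Pr`:
`Pr(A ∩ θ^{-n}B) → Pr(A) Pr(B)` for all measurable `A`, `B`. -/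
def StrongMixing {Ω : Type*} [MeasurableSpace Ω] (Pr : Measure Ω) (θ : Ω → Ω) : Prop :=
  ∀ A B : Set Ω, MeasurableSet A → MeasurableSet B →
    Tendsto (fun n : ℕ => Pr (A ∩ θ^[n] ⁻¹' B)) atTop (nhds (Pr A * Pr B))

/-- The set `A_{δ,M} = {ω : γ_ω ≥ δ, n_ω ≤ M}`. -/
def goodSet {Ω : Type*} (γ : Ω → ℝ) (N : Ω → ℕ) (δ : ℝ) (M : ℕ) : Set Ω :=
  {ω | δ ≤ γ ω ∧ N ω ≤ M}

/-!
If `κ x ≥ δ m` for all `x ∈ S`, then composing with `κ` shrinks the oscillation of a function by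
the factor `1 - δ`, because all the measures `κ x` share the part `δ m`; composing with any Markov
kernel never increases it. Fix `ω` and cut the past into blocks of length `M`. When `θ^{-jM} ω` lies
in `A_{δ,M}`, the block that ends at time `-jM` contains the `n_{θ^{-jM} ω} ≤ M` steps of the
minorization, so it contributes a factor `1 - δ`, and the oscillation of `x ↦ P_{θ^{-n}ω,n}(x, Γ)`
is at most `1 - δ` to the number of visits. By recurrence of the ergodic map `θ^{-M}` this number
almost surely tends to infinity. Since the laws at time `0` of chains started earlier are averages
of the laws of chains started later, these laws are Cauchy uniformly in `Γ`; their limit is `μ_ω`.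
-/

open scoped Topology

section UniformLimit

variable {α ι M : Type*} [MeasurableSpace α] {l : Filter ι} [l.NeBot]

lemma exists_vectorMeasure_tendstoUniformly [AddCommGroup M] [UniformSpace M]
    [IsUniformAddGroup M] [T2Space M] [CompleteSpace M] {v : ι → VectorMeasure α M}
    (hv : UniformCauchySeqOn (fun i s => v i s) l Set.univ) :
    ∃ w : VectorMeasure α M, TendstoUniformly (fun i s => v i s) w l := by
  have hlim (s : Set α) : ∃ a, Tendsto (fun i => v i s) l (𝓝 a) :=
    CompleteSpace.complete (hv.cauchy_map (Set.mem_univ s))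
  choose w hw using hlim
  have hunif : TendstoUniformly (fun i s => v i s) w l :=
    tendstoUniformlyOn_univ.1 (hv.tendstoUniformlyOn_of_tendsto fun s _ => hw s)
  refine ⟨⟨w, ?_, fun s hs => ?_, fun f hf hd => ?_⟩, hunif⟩
  · exact tendsto_nhds_unique (hw ∅) (by simp only [VectorMeasure.empty, tendsto_const_nhds])
  · exact tendsto_nhds_unique (hw s)
      (by simp only [VectorMeasure.not_measurable _ hs, tendsto_const_nhds])
  · have hpartial (i : ι) (t : Finset ℕ) : v i (⋃ k ∈ t, f k) = ∑ k ∈ t, v i (f k) :=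
      (v i).of_biUnion_finset (hd.set_pairwise _) fun k _ => hf k
    have hpartial_lim (t : Finset ℕ) : w (⋃ k ∈ t, f k) = ∑ k ∈ t, w (f k) :=
      tendsto_nhds_unique (hw _)
        (by simpa only [hpartial] using tendsto_finsetSum t fun k _ => hw (f k))
    have hsums :
        TendstoUniformly (fun i t => ∑ k ∈ t, v i (f k)) (fun t => ∑ k ∈ t, w (f k)) l := by
      simpa only [Function.comp_def, hpartial, hpartial_lim]
        using hunif.comp fun t : Finset ℕ => ⋃ k ∈ t, f k
    -- Moore–Osgood: uniformity over the finite partial sums lets the two limits be interchanged.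
    exact hsums.tendsto_of_eventually_tendsto
      (Eventually.of_forall fun i => (v i).m_iUnion hf hd) (hw _)

lemma exists_isProbabilityMeasure_tendsto_real {ν : ι → Measure α}
    [∀ i, IsProbabilityMeasure (ν i)]
    (hν : UniformCauchySeqOn (fun i s => (ν i).real s) l {s | MeasurableSet s}) :
    ∃ μ : Measure α, IsProbabilityMeasure μ ∧
      ∀ s, MeasurableSet s → Tendsto (fun i => (ν i).real s) l (𝓝 (μ.real s)) := by
  have happly (i : ι) {s : Set α} (hs : MeasurableSet s) :
      (ν i).toSignedMeasure s = (ν i).real s :=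
    Measure.toSignedMeasure_apply_measurable hs
  have hsigned : UniformCauchySeqOn (fun i s => (ν i).toSignedMeasure s) l Set.univ := by
    intro u hu
    filter_upwards [hν u hu] with p hp s _
    by_cases hs : MeasurableSet s
    · simpa only [happly _ hs] using hp s hs
    · simpa only [VectorMeasure.not_measurable _ hs] using refl_mem_uniformity hu
  obtain ⟨w, hw⟩ := exists_vectorMeasure_tendstoUniformly hsigned
  have hlim (s : Set α) (hs : MeasurableSet s) : Tendsto (fun i => (ν i).real s) l (𝓝 (w s)) := by
    simpa only [happly _ hs] using hw.tendsto_at s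
  have hw0 : VectorMeasure.restrict 0 Set.univ ≤ VectorMeasure.restrict w Set.univ :=
    VectorMeasure.restrict_le_restrict_of_subset_le _ _ fun s hs _ =>
      ge_of_tendsto' (hlim s hs) fun i => measureReal_nonneg
  let μ := SignedMeasure.toMeasureOfZeroLE w Set.univ MeasurableSet.univ hw0
  have hμ (s : Set α) (hs : MeasurableSet s) : μ.real s = w s := by
    rw [SignedMeasure.toMeasureOfZeroLE_real_apply _ hw0 MeasurableSet.univ hs, Set.univ_inter]
  have huniv : μ.real Set.univ = 1 := by
    rw [hμ _ MeasurableSet.univ]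
    exact tendsto_nhds_unique (hlim _ MeasurableSet.univ)
      (by simp only [probReal_univ, tendsto_const_nhds])
  refine ⟨μ, ⟨(ENNReal.toReal_eq_one_iff _).1 huniv⟩, fun s hs => ?_⟩
  rw [hμ s hs]
  exact hlim s hs

end UniformLimit

section Contraction

variable {α : Type*} [MeasurableSpace α] {ν : Measure α} [IsProbabilityMeasure ν]
  {f : α → ℝ} {c : ℝ}

lemma abs_sub_integral_le {t : ℝ} (hf : Integrable f ν) (h : ∀ᵐ x ∂ν, |t - f x| ≤ c) :
    |t - ∫ x, f x ∂ν| ≤ c := by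
  have hbound := norm_integral_le_of_norm_le_const (f := fun x => t - f x) h
  rwa [integral_sub (integrable_const t) hf, integral_const, probReal_univ, one_smul, mul_one]
    at hbound

lemma le_integral_of_smul_le {m : Measure α} [IsProbabilityMeasure m] {a δ : ℝ} (hδ : 0 ≤ δ)
    (hfm : Integrable f m) (hfν : Integrable f ν) (hle : ENNReal.ofReal δ • m ≤ ν)
    (ha : ∀ᵐ x ∂ν, a ≤ f x) :
    δ * ∫ x, f x ∂m + (1 - δ) * a ≤ ∫ x, f x ∂ν := by
  have hmono : δ * ∫ x, (f x - a) ∂m ≤ ∫ x, (f x - a) ∂ν := by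
    have h := integral_mono_measure hle (ha.mono fun x hx => sub_nonneg.2 hx)
      (hfν.sub (integrable_const a))
    rwa [integral_smul_measure, ENNReal.toReal_ofReal hδ, smul_eq_mul] at h
  rw [integral_sub hfm (integrable_const a), integral_sub hfν (integrable_const a)] at hmono
  simp only [integral_const, probReal_univ, one_smul] at hmono
  linarith

lemma abs_integral_sub_integral_le_of_smul_le {ν' m : Measure α} [IsProbabilityMeasure ν']
    [IsProbabilityMeasure m] {S : Set α} {δ : ℝ} (hδ : 0 ≤ δ)
    (hosc : ∀ x ∈ S, ∀ y ∈ S, |f x - f y| ≤ c)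
    (hfm : Integrable f m) (hfν : Integrable f ν) (hfν' : Integrable f ν')
    (hle : ENNReal.ofReal δ • m ≤ ν) (hle' : ENNReal.ofReal δ • m ≤ ν')
    (hS : ∀ᵐ x ∂ν, x ∈ S) (hS' : ∀ᵐ x ∂ν', x ∈ S) :
    |∫ x, f x ∂ν - ∫ x, f x ∂ν'| ≤ (1 - δ) * c := by
  have hle_add (x : α) (hx : x ∈ S) (y : α) (hy : y ∈ S) : f x ≤ f y + c := by
    linarith [(abs_le.1 (hosc x hx y hy)).2]
  obtain ⟨x₀, hx₀⟩ := hS.exists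
  obtain ⟨a, ha⟩ : ∃ a, ∀ x ∈ S, a ≤ f x ∧ f x ≤ a + c := by
    have hbdd : BddBelow (f '' S) :=
      ⟨f x₀ - c, Set.forall_mem_image.2 fun y hy => sub_le_iff_le_add.2 (hle_add x₀ hx₀ y hy)⟩
    exact ⟨sInf (f '' S), fun x hx => ⟨csInf_le hbdd (Set.mem_image_of_mem f hx),
      sub_le_iff_le_add.1 (le_csInf (Set.Nonempty.image f ⟨x₀, hx₀⟩)
        (Set.forall_mem_image.2 fun y hy => sub_le_iff_le_add.2 (hle_add x hx y hy)))⟩⟩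
  -- Both integrals contain the same part `δ * ∫ x, f x ∂m`, which cancels in their difference.
  have hlower := le_integral_of_smul_le hδ hfm hfν hle (hS.mono fun x hx => (ha x hx).1)
  have hlower' := le_integral_of_smul_le hδ hfm hfν' hle' (hS'.mono fun x hx => (ha x hx).1)
  have hupper := le_integral_of_smul_le hδ hfm.neg hfν.neg hle
    (hS.mono fun x hx => neg_le_neg (ha x hx).2)
  have hupper' := le_integral_of_smul_le hδ hfm.neg hfν'.neg hle'
    (hS'.mono fun x hx => neg_le_neg (ha x hx).2)
  simp only [Pi.neg_apply, integral_neg] at hupper hupper'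
  exact abs_sub_le_iff.2 ⟨by linarith, by linarith⟩

end Contraction

section Doeblin

variable {α β γ : Type*} [MeasurableSpace α] [MeasurableSpace β] [MeasurableSpace γ]

lemma integrable_kernel_real (κ : Kernel α β) [IsFiniteKernel κ] (ν : Measure α)
    [IsFiniteMeasure ν] {Γ : Set β} (hΓ : MeasurableSet Γ) :
    Integrable (fun z => (κ z).real Γ) ν :=
  Integrable.of_bound (κ.measurable_coe hΓ).ennreal_toReal.aestronglyMeasurable κ.bound.toReal
    (Eventually.of_forall fun z => by
      rw [Real.norm_of_nonneg measureReal_nonneg]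
      exact ENNReal.toReal_mono (Kernel.bound_ne_top κ) (κ.measure_le_bound z Γ))

lemma kernel_comp_real_apply (κ : Kernel β γ) [IsFiniteKernel κ] (η : Kernel α β) (x : α)
    {Γ : Set γ} (hΓ : MeasurableSet Γ) :
    ((κ ∘ₖ η) x).real Γ = ∫ z, (κ z).real Γ ∂(η x) := by
  rw [measureReal_def, Kernel.comp_apply' _ _ _ hΓ]
  exact (integral_toReal (κ.measurable_coe hΓ).aemeasurable
    (Eventually.of_forall fun z => measure_lt_top _ _)).symm

/-- The Doeblin minorization condition on `S` with constant `δ`: the transition probabilities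
`κ x` from all points `x ∈ S` dominate `δ` times one and the same probability measure. -/
def DoeblinOn (κ : Kernel α β) (S : Set α) (δ : ℝ) : Prop :=
  ∃ m : Measure β, IsProbabilityMeasure m ∧ ∀ x ∈ S, ENNReal.ofReal δ • m ≤ κ x

namespace DoeblinOn

variable {κ : Kernel α β} {S : Set α} {δ : ℝ}

lemma le_one [IsMarkovKernel κ] (h : DoeblinOn κ S δ) (hS : S.Nonempty) : δ ≤ 1 := by
  obtain ⟨m, hm, hle⟩ := h
  obtain ⟨x, hx⟩ := hS
  simpa only [Measure.smul_apply, smul_eq_mul, measure_univ, mul_one, ENNReal.ofReal_le_one]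
    using hle x hx Set.univ

lemma mono {δ' : ℝ} (h : DoeblinOn κ S δ) (hδ : δ' ≤ δ) : DoeblinOn κ S δ' := by
  obtain ⟨m, hm, hle⟩ := h
  refine ⟨m, hm, fun x hx => le_trans ?_ (hle x hx)⟩
  gcongr

lemma of_forall_subset {m : Measure β} [IsProbabilityMeasure m] {X : Set β}
    (hX : MeasurableSet X) (hmX : m X = 1)
    (h : ∀ x ∈ S, ∀ Γ, MeasurableSet Γ → Γ ⊆ X → ENNReal.ofReal δ * m Γ ≤ κ x Γ) :
    DoeblinOn κ S δ := by
  refine ⟨m, inferInstance, fun x hx => Measure.le_iff.2 fun Γ hΓ => ?_⟩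
  calc ENNReal.ofReal δ * m Γ
      = ENNReal.ofReal δ * m (Γ ∩ X) := by
        rw [measure_inter_conull ((prob_compl_eq_zero_iff hX).2 hmX)]
    _ ≤ κ x (Γ ∩ X) := h x hx _ (hΓ.inter hX) Set.inter_subset_right
    _ ≤ κ x Γ := measure_mono Set.inter_subset_left

lemma comp {η : Kernel γ α} [IsMarkovKernel η] {T : Set γ} (h : DoeblinOn κ S δ)
    (hTS : ∀ x ∈ T, ∀ᵐ z ∂(η x), z ∈ S) : DoeblinOn (κ ∘ₖ η) T δ := by
  obtain ⟨m, hm, hle⟩ := h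
  refine ⟨m, hm, fun x hx => Measure.le_iff.2 fun Γ hΓ => ?_⟩
  rw [Kernel.comp_apply' _ _ _ hΓ]
  calc ENNReal.ofReal δ * m Γ = ∫⁻ _, ENNReal.ofReal δ * m Γ ∂(η x) := by
        rw [lintegral_const, measure_univ, mul_one]
    _ ≤ ∫⁻ z, κ z Γ ∂(η x) := lintegral_mono_ae ((hTS x hx).mono fun z hz => hle z hz Γ)

lemma osc_comp_le {κ' : Kernel β γ} [IsFiniteKernel κ'] [IsMarkovKernel κ]
    (h : DoeblinOn κ S δ) (hδ : 0 ≤ δ) {T : Set β} (hST : ∀ x ∈ S, ∀ᵐ z ∂(κ x), z ∈ T)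
    {Γ : Set γ} (hΓ : MeasurableSet Γ) {c : ℝ}
    (hosc : ∀ x ∈ T, ∀ y ∈ T, |(κ' x).real Γ - (κ' y).real Γ| ≤ c) :
    ∀ x ∈ S, ∀ y ∈ S, |((κ' ∘ₖ κ) x).real Γ - ((κ' ∘ₖ κ) y).real Γ| ≤ (1 - δ) * c := by
  intro x hx y hy
  obtain ⟨m, hm, hle⟩ := h
  rw [kernel_comp_real_apply κ' κ x hΓ, kernel_comp_real_apply κ' κ y hΓ]
  exact abs_integral_sub_integral_le_of_smul_le hδ hosc (integrable_kernel_real κ' _ hΓ)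
    (integrable_kernel_real κ' _ hΓ) (integrable_kernel_real κ' _ hΓ) (hle x hx) (hle y hy)
    (hST x hx) (hST y hy)

end DoeblinOn

end Doeblin

section Visits

lemma tendsto_sum_Icc_indicator_atTop {J : Set ℕ} (hJ : J.Infinite) :
    Tendsto (fun n => ∑ j ∈ Finset.Icc 1 n, J.indicator (fun _ => (1 : ℕ)) j) atTop atTop := by
  have hrange := ((Set.infinite_iff_tendsto_sum_indicator_atTop (one_pos (α := ℕ))).1 hJ).comp
    (tendsto_add_atTop_nat 1)
  refine Tendsto.atTop_of_const_add (J.indicator (fun _ => 1) 0) (hrange.congr fun n => ?_)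
  rw [Function.comp_apply, Finset.range_eq_Ico, Finset.sum_eq_sum_Ico_succ_bot (Nat.add_one_pos n),
    Nat.zero_add, Finset.Ico_add_one_right_eq_Icc]

end Visits

section PastEvolution

variable {α : Type*} [MeasurableSpace α]

/-- A time-inhomogeneous Markov evolution on the non-positive times, with moving state spaces:
`X n` is the state space at time `-n`, and `Q i k` the `k`-step transition kernel from time
`-(k + i)` to time `-i`. The starting time is written `k + i`, not `i + k`, so that it reduces
definitionally to `k` for the kernels `Q 0 k` that end at time `0`. -/
structure IsPastEvolution (X : ℕ → Set α) (Q : ℕ → ℕ → Kernel α α) : Prop where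
  measurableSet (n : ℕ) : MeasurableSet (X n)
  isMarkovKernel (i k : ℕ) : IsMarkovKernel (Q i k)
  comp_eq (i n k : ℕ) : Q i (k + n) = Q i n ∘ₖ Q (n + i) k
  ae_mem (i k : ℕ) {x : α} : x ∈ X (k + i) → ∀ᵐ z ∂(Q i k x), z ∈ X i

namespace IsPastEvolution

variable {X : ℕ → Set α} {Q : ℕ → ℕ → Kernel α α} {n M : ℕ} {c δ : ℝ} {Γ : Set α}

lemma doeblinOn_of_le (h : IsPastEvolution X Q) {i n' : ℕ} (hD : DoeblinOn (Q i n) (X (n + i)) δ)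
    (hn : n ≤ n') : DoeblinOn (Q i n') (X (n' + i)) δ := by
  obtain ⟨k, rfl⟩ := Nat.exists_eq_add_of_le' hn
  have := h.isMarkovKernel (n + i) k
  rw [h.comp_eq, Nat.add_assoc]
  exact hD.comp fun x hx => h.ae_mem (n + i) k hx

lemma abs_sub_add_le_of_osc_le (h : IsPastEvolution X Q) (hΓ : MeasurableSet Γ)
    (hosc : ∀ x ∈ X n, ∀ y ∈ X n, |(Q 0 n x).real Γ - (Q 0 n y).real Γ| ≤ c) (k : ℕ) :
    ∀ x ∈ X n, ∀ y ∈ X (k + n), |(Q 0 n x).real Γ - (Q 0 (k + n) y).real Γ| ≤ c := by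
  intro x hx y hy
  have := h.isMarkovKernel 0 n
  have := h.isMarkovKernel n k
  rw [h.comp_eq, Nat.add_zero, kernel_comp_real_apply _ _ _ hΓ]
  exact abs_sub_integral_le (integrable_kernel_real _ _ hΓ)
    ((h.ae_mem n k hy).mono fun z hz => hosc x hx z hz)

lemma osc_add_le (h : IsPastEvolution X Q) (hΓ : MeasurableSet Γ)
    (hosc : ∀ x ∈ X n, ∀ y ∈ X n, |(Q 0 n x).real Γ - (Q 0 n y).real Γ| ≤ c) (k : ℕ) :
    ∀ x ∈ X (k + n), ∀ y ∈ X (k + n),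
      |(Q 0 (k + n) x).real Γ - (Q 0 (k + n) y).real Γ| ≤ c := by
  intro x hx y hy
  have := h.isMarkovKernel 0 n
  have := h.isMarkovKernel n k
  rw [h.comp_eq, Nat.add_zero, kernel_comp_real_apply _ _ y hΓ, ← Nat.add_zero n, ← h.comp_eq]
  refine abs_sub_integral_le (integrable_kernel_real _ _ hΓ)
    ((h.ae_mem n k hy).mono fun z hz => ?_)
  rw [abs_sub_comm]
  exact h.abs_sub_add_le_of_osc_le hΓ hosc k z hz x hx

lemma osc_mul_le_pow (h : IsPastEvolution X Q) {J : Set ℕ} (hδ0 : 0 ≤ δ)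
    (hJ : ∀ j ∈ J, DoeblinOn (Q (j * M) M) (X (M + j * M)) δ) (hΓ : MeasurableSet Γ) (q : ℕ) :
    ∀ x ∈ X (q * M), ∀ y ∈ X (q * M), |(Q 0 (q * M) x).real Γ - (Q 0 (q * M) y).real Γ|
      ≤ (1 - δ) ^ ∑ j ∈ Finset.range q, J.indicator (fun _ => 1) j := by
  induction q with
  | zero =>
    intro x _ y _
    have := h.isMarkovKernel 0 (0 * M)
    rw [Finset.range_zero, Finset.sum_empty, pow_zero]
    exact abs_sub_le_of_nonneg_of_le measureReal_nonneg measureReal_le_one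
      measureReal_nonneg measureReal_le_one
  | succ q ih =>
    rw [Nat.succ_mul, Nat.add_comm, Finset.sum_range_succ]
    by_cases hq : q ∈ J
    · have := h.isMarkovKernel 0 (q * M)
      have := h.isMarkovKernel (q * M) M
      rw [Set.indicator_of_mem hq, pow_succ', h.comp_eq]
      exact (hJ q hq).osc_comp_le hδ0 (fun x hx => h.ae_mem (q * M) M hx) hΓ ih
    · rw [Set.indicator_of_notMem hq, Nat.add_zero]
      exact h.osc_add_le hΓ ih M

lemma osc_le_pow (h : IsPastEvolution X Q) {J : Set ℕ} (hδ0 : 0 ≤ δ) (hδ1 : δ ≤ 1)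
    (hJ : ∀ j ∈ J, DoeblinOn (Q (j * M) M) (X (M + j * M)) δ) (hΓ : MeasurableSet Γ) (n : ℕ) :
    ∀ x ∈ X n, ∀ y ∈ X n, |(Q 0 n x).real Γ - (Q 0 n y).real Γ|
      ≤ (1 - δ) ^ ∑ j ∈ Finset.Icc 1 (n / M - 1), J.indicator (fun _ => 1) j := by
  intro x hx y hy
  have hblocks := h.osc_add_le hΓ (h.osc_mul_le_pow hδ0 hJ hΓ (n / M)) (n % M)
  rw [Nat.mod_add_div'] at hblocks
  refine (hblocks x hx y hy).trans
    (pow_le_pow_of_le_one (sub_nonneg.2 hδ1) (sub_le_self 1 hδ0)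
      (Finset.sum_le_sum_of_subset fun j hj => ?_))
  rw [Finset.mem_Icc] at hj
  rw [Finset.mem_range]
  omega

lemma exists_isProbabilityMeasure_abs_sub_le (h : IsPastEvolution X Q)
    (hX : ∀ n, (X n).Nonempty) {b : ℕ → ℝ} (hb : Tendsto b atTop (𝓝 0))
    (hosc : ∀ n, ∀ Γ, MeasurableSet Γ → ∀ x ∈ X n, ∀ y ∈ X n,
      |(Q 0 n x).real Γ - (Q 0 n y).real Γ| ≤ b n) :
    ∃ μ : Measure α, IsProbabilityMeasure μ ∧ μ (X 0) = 1 ∧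
      ∀ n, ∀ x ∈ X n, ∀ Γ, MeasurableSet Γ → |(Q 0 n x).real Γ - μ.real Γ| ≤ b n := by
  choose x₀ hx₀ using hX
  have hMarkov := h.isMarkovKernel 0
  have hdist (n k : ℕ) (hnk : n ≤ k) (x : α) (hx : x ∈ X n) (Γ : Set α) (hΓ : MeasurableSet Γ) :
      |(Q 0 n x).real Γ - (Q 0 k (x₀ k)).real Γ| ≤ b n := by
    obtain ⟨k, rfl⟩ := Nat.exists_eq_add_of_le' hnk
    exact h.abs_sub_add_le_of_osc_le hΓ (hosc n Γ hΓ) k x hx _ (hx₀ _)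
  have hcauchy : UniformCauchySeqOn (fun n Γ => (Q 0 n (x₀ n)).real Γ) atTop
      {Γ | MeasurableSet Γ} := by
    rw [Metric.uniformCauchySeqOn_iff]
    intro ε hε
    obtain ⟨n, hn⟩ := (hb.eventually_lt_const (half_pos hε)).exists
    refine ⟨n, fun k hk l hl Γ hΓ => ?_⟩
    calc dist ((Q 0 k (x₀ k)).real Γ) ((Q 0 l (x₀ l)).real Γ)
        ≤ dist ((Q 0 n (x₀ n)).real Γ) ((Q 0 k (x₀ k)).real Γ)
          + dist ((Q 0 n (x₀ n)).real Γ) ((Q 0 l (x₀ l)).real Γ) := dist_triangle_left _ _ _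
      _ ≤ b n + b n :=
        add_le_add (hdist n k hk _ (hx₀ n) Γ hΓ) (hdist n l hl _ (hx₀ n) Γ hΓ)
      _ < ε := by linarith
  obtain ⟨μ, hμ, hlim⟩ := exists_isProbabilityMeasure_tendsto_real hcauchy
  have hone (n : ℕ) : (Q 0 n (x₀ n)).real (X 0) = 1 := by
    rw [measureReal_def, (mem_ae_iff_prob_eq_one (h.measurableSet 0)).1 (h.ae_mem 0 n (hx₀ n)),
      ENNReal.toReal_one]
  have hμX : μ.real (X 0) = 1 :=
    tendsto_nhds_unique (hlim _ (h.measurableSet 0)) (by simp only [hone, tendsto_const_nhds])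
  exact ⟨μ, hμ, (ENNReal.toReal_eq_one_iff _).1 hμX, fun n x hx Γ hΓ =>
    le_of_tendsto (tendsto_const_nhds.sub (hlim Γ hΓ)).abs
      ((eventually_ge_atTop n).mono fun k hk => hdist n k hk x hx Γ hΓ)⟩

theorem exists_isProbabilityMeasure_abs_sub_le_pow (h : IsPastEvolution X Q)
    (hX : ∀ n, (X n).Nonempty) (hδ : 0 < δ) (hM : M ≠ 0) {J : Set ℕ}
    (hJinf : J.Infinite) (hJ : ∀ j ∈ J, DoeblinOn (Q (j * M) M) (X (M + j * M)) δ) :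
    ∃ μ : Measure α, IsProbabilityMeasure μ ∧ μ (X 0) = 1 ∧
      ∀ n, ∀ x ∈ X n, ∀ Γ, MeasurableSet Γ → |(Q 0 n x).real Γ - μ.real Γ|
        ≤ (1 - δ) ^ ∑ j ∈ Finset.Icc 1 (n / M - 1), J.indicator (fun _ => 1) j := by
  have hδ1 : δ ≤ 1 := by
    obtain ⟨j, hj⟩ := hJinf.nonempty
    have := h.isMarkovKernel (j * M) M
    exact (hJ j hj).le_one (hX _)
  have hvisits := (tendsto_sum_Icc_indicator_atTop hJinf).comp
    ((tendsto_sub_atTop_nat 1).comp (Nat.tendsto_div_const_atTop hM))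
  exact h.exists_isProbabilityMeasure_abs_sub_le hX
    ((tendsto_pow_atTop_nhds_zero_of_lt_one (sub_nonneg.2 hδ1) (sub_lt_self 1 hδ)).comp hvisits)
    fun n Γ hΓ => h.osc_le_pow hδ.le hδ1 hJ hΓ n

end IsPastEvolution

end PastEvolution

section Recurrence

variable {α : Type*} [MeasurableSpace α] {μ : Measure α} {f : α → α}

lemma ae_frequently_iterate_mem_of_ergodic [IsFiniteMeasure μ] (hf : Ergodic f μ) {s : Set α}
    (hs : MeasurableSet s) (h0 : μ s ≠ 0) : ∀ᵐ x ∂μ, ∃ᶠ n in atTop, f^[n] x ∈ s := by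
  let T : Set α := {x | ∃ᶠ n in atTop, f^[n] x ∈ s}
  have hT : MeasurableSet T := by
    have hlimsup : T = limsup (fun n => f^[n] ⁻¹' s) atTop :=
      Set.ext fun x => (mem_limsup_iff_frequently_mem (s := fun n => f^[n] ⁻¹' s)).symm
    rw [hlimsup]
    exact .measurableSet_limsup fun n => hf.measurable.iterate n hs
  have hinv : f ⁻¹' T = T := by
    ext x
    calc (∃ᶠ n in atTop, f^[n + 1] x ∈ s)
        ↔ ∃ᶠ n in map (· + 1) atTop, f^[n] x ∈ s := frequently_map.symm
      _ ↔ ∃ᶠ n in atTop, f^[n] x ∈ s := by rw [map_add_atTop_eq_nat]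
  have hreturn : ∃ᵐ x ∂μ, x ∈ s ∧ x ∈ T :=
    hf.toMeasurePreserving.conservative.frequently_ae_mem_and_frequently_image_mem
      hs.nullMeasurableSet h0
  exact (hf.ae_mem_or_ae_notMem hT hinv).resolve_right fun hnot =>
    hreturn (hnot.mono fun x hx hxT => hx hxT.2)

lemma StrongMixing.ergodic_iterate [IsProbabilityMeasure μ] (hmix : StrongMixing μ f)
    (hf : MeasurePreserving f μ μ) {M : ℕ} (hM : M ≠ 0) : Ergodic f^[M] μ where
  toMeasurePreserving := hf.iterate M
  aeconst_set s hs hinv := by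
    have hinter (n : ℕ) : s ∩ f^[M * n] ⁻¹' s = s := by
      rw [Function.iterate_mul, Function.IsFixedPt.preimage_iterate hinv n, Set.inter_self]
    have hmul : μ s = μ s * μ s := by
      refine tendsto_nhds_unique ?_ ((hmix s s hs hs).comp
        (tendsto_id.const_mul_atTop' (Nat.pos_of_ne_zero hM)))
      simp only [Function.comp_def, id, hinter, tendsto_const_nhds]
    rw [eventuallyConst_set']
    obtain h0 | h0 := eq_or_ne (μ s) 0
    · exact Or.inl (ae_eq_empty.2 h0)
    · exact Or.inr (ae_eq_univ_iff_measure_eq hs.nullMeasurableSet |>.2 <| by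
        rw [measure_univ, ← ENNReal.mul_eq_left h0 (measure_ne_top μ s), ← hmul])

lemma ergodic_symm_iterate {e : α ≃ᵐ α} (he : MeasurePreserving e μ μ) {n : ℕ}
    (hn : Ergodic e^[n] μ) : Ergodic e.symm^[n] μ where
  toMeasurePreserving := (he.symm e).iterate n
  aeconst_set s hs hinv := hn.aeconst_set hs (by
    conv_lhs => rw [← hinv]
    rw [← Set.preimage_comp, (Function.LeftInverse.iterate e.symm_apply_apply n).comp_eq_id,
      Set.preimage_id])

lemma ae_forall_iterate (hf : MeasurePreserving f μ μ) {p : α → Prop} (hp : ∀ᵐ x ∂μ, p x) :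
    ∀ᵐ x ∂μ, ∀ n, p (f^[n] x) :=
  ae_all_iff.2 fun n => (hf.iterate n).quasiMeasurePreserving.ae hp

end Recurrence

section EnvKernel

variable {Ω 𝒳 : Type*} [MeasurableSpace 𝒳] {θ θ' : Ω → Ω} {P : Ω → Kernel 𝒳 𝒳}

lemma isMarkovKernel_envKernel (hP : ∀ ω, IsMarkovKernel (P ω)) (n : ℕ) (ω : Ω) :
    IsMarkovKernel (envKernel θ P n ω) := by
  induction n generalizing ω with
  | zero => rw [envKernel]; infer_instance
  | succ n ih =>
    have := ih (θ ω)
    rw [envKernel]; infer_instance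

lemma envKernel_add (k n : ℕ) (ω : Ω) :
    envKernel θ P (k + n) ω = envKernel θ P n (θ^[k] ω) ∘ₖ envKernel θ P k ω := by
  induction k generalizing ω with
  | zero => rw [Nat.zero_add, envKernel, Kernel.comp_id, Function.iterate_zero, id]
  | succ k ih =>
    rw [Nat.succ_add, envKernel, ih, envKernel, Kernel.comp_assoc, Function.iterate_succ_apply]

lemma ae_mem_envKernel_iterate (hinv : Function.RightInverse θ' θ)
    (hP : ∀ ω, IsMarkovKernel (P ω)) {Xs : Ω → Set 𝒳} (hXs : ∀ ω, MeasurableSet (Xs ω)) {ω : Ω}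
    (hfib : ∀ n, ∀ x ∈ Xs (θ'^[n + 1] ω), P (θ'^[n + 1] ω) x (Xs (θ'^[n] ω)) = 1)
    (i k : ℕ) {x : 𝒳} (hx : x ∈ Xs (θ'^[k + i] ω)) :
    ∀ᵐ z ∂(envKernel θ P k (θ'^[k + i] ω) x), z ∈ Xs (θ'^[i] ω) := by
  induction k generalizing x with
  | zero =>
    rw [Nat.zero_add] at hx ⊢
    rw [envKernel, Kernel.id_apply]
    exact (ae_dirac_iff (hXs _)).2 hx
  | succ k ih =>
    have hback : θ (θ'^[k + 1 + i] ω) = θ'^[k + i] ω := by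
      rw [Nat.succ_add, Function.iterate_succ_apply', hinv]
    rw [Nat.succ_add] at hx hback ⊢
    have hfirst : ∀ᵐ y ∂(P (θ'^[k + i + 1] ω) x), y ∈ Xs (θ'^[k + i] ω) :=
      (mem_ae_iff_prob_eq_one (hXs _)).2 (hfib (k + i) x hx)
    rw [envKernel, hback]
    exact Kernel.ae_comp_of_ae_ae (hXs _) (hfirst.mono fun y hy => ih hy)

lemma isPastEvolution_envKernel (hinv : Function.RightInverse θ' θ)
    (hP : ∀ ω, IsMarkovKernel (P ω)) {Xs : Ω → Set 𝒳} (hXs : ∀ ω, MeasurableSet (Xs ω)) {ω : Ω}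
    (hfib : ∀ n, ∀ x ∈ Xs (θ'^[n + 1] ω), P (θ'^[n + 1] ω) x (Xs (θ'^[n] ω)) = 1) :
    IsPastEvolution (fun n => Xs (θ'^[n] ω)) fun i k => envKernel θ P k (θ'^[k + i] ω) where
  measurableSet n := hXs _
  isMarkovKernel i k := isMarkovKernel_envKernel hP k _
  comp_eq i n k := by
    rw [envKernel_add, Nat.add_assoc, Function.iterate_add_apply θ' k, hinv.iterate k]
  ae_mem := ae_mem_envKernel_iterate hinv hP hXs hfib

end EnvKernel

theorem random_geometric_ergodicity_hits_general
    {Ω 𝒳 : Type*} [MeasurableSpace Ω] [MeasurableSpace 𝒳]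
    (Pr : Measure Ω) [IsFiniteMeasure Pr]
    (θ : Ω ≃ᵐ Ω) (hθ : MeasurePreserving θ Pr Pr) (M : ℕ) (hM : M ≠ 0)
    (hergodic : Ergodic θ^[M] Pr)
    (Xs : Ω → Set 𝒳) (hXs : ∀ ω, MeasurableSet (Xs ω))
    (P : Ω → Kernel 𝒳 𝒳) (hPMarkov : ∀ ω, IsMarkovKernel (P ω))
    (hPfib : ∀ᵐ ω ∂Pr, ∀ x ∈ Xs ω, P ω x (Xs (θ ω)) = 1)
    (N : Ω → ℕ) (hN : Measurable N) (γ : Ω → ℝ) (hγ : Measurable γ)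
    (m : Ω → Measure 𝒳) (hm : ∀ ω, IsProbabilityMeasure (m ω))
    (hm_supp : ∀ᵐ ω ∂Pr, m ω (Xs ω) = 1)
    (hDoeb : ∀ᵐ ω ∂Pr, ∀ x ∈ Xs (θ.symm^[N ω] ω), ∀ Γ : Set 𝒳, MeasurableSet Γ → Γ ⊆ Xs ω →
      ENNReal.ofReal (γ ω) * m ω Γ ≤ envKernel θ P (N ω) (θ.symm^[N ω] ω) x Γ)
    (δ : ℝ) (hδ : 0 < δ) (hA : 0 < Pr (goodSet γ N δ M)) :
    ∀ᵐ ω ∂Pr, ∃ μ : Measure 𝒳, IsProbabilityMeasure μ ∧ μ (Xs ω) = 1 ∧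
      ∀ n : ℕ, ∀ x ∈ Xs (θ.symm^[n] ω), ∀ Γ : Set 𝒳, MeasurableSet Γ →
        |(envKernel θ P n (θ.symm^[n] ω) x Γ).toReal - (μ Γ).toReal|
          ≤ (1 - δ) ^ (∑ j ∈ Finset.Icc 1 (n / M - 1),
              (goodSet γ N δ M).indicator (fun _ => (1 : ℕ)) (θ.symm^[j * M] ω)) := by
  have hsymm : MeasurePreserving θ.symm Pr Pr := hθ.symm θ
  have hA_meas : MeasurableSet (goodSet γ N δ M) :=
    (measurableSet_le measurable_const hγ).inter (measurableSet_le hN measurable_const)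
  filter_upwards [ae_forall_iterate hsymm hPfib, ae_forall_iterate hsymm hm_supp,
    ae_forall_iterate hsymm hDoeb,
    ae_frequently_iterate_mem_of_ergodic (ergodic_symm_iterate hθ hergodic) hA_meas hA.ne']
    with ω hfib hsupp hminor hvisit
  have hpast : IsPastEvolution (fun n => Xs (θ.symm^[n] ω))
      fun i k => envKernel θ P k (θ.symm^[k + i] ω) := by
    refine isPastEvolution_envKernel θ.apply_symm_apply hPMarkov hXs fun n x hx => ?_
    simpa only [Function.iterate_succ_apply', θ.apply_symm_apply] using hfib (n + 1) x hx
  refine hpast.exists_isProbabilityMeasure_abs_sub_le_pow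
    (J := {j | θ.symm^[j * M] ω ∈ goodSet γ N δ M})
    (fun n => nonempty_of_measure_ne_zero ((hsupp n).trans_ne one_ne_zero)) hδ hM ?_ ?_
  · refine Nat.frequently_atTop_iff_infinite.1 (hvisit.mono fun j hj => ?_)
    rwa [← Function.iterate_mul, Nat.mul_comm] at hj
  · rintro j ⟨hγj, hNj⟩
    refine hpast.doeblinOn_of_le (DoeblinOn.mono ?_ hγj) hNj
    refine .of_forall_subset (hXs _) (hsupp (j * M)) ?_
    simpa only [Function.iterate_add_apply] using hminor (j * M)

/-- Random geometric ergodicity through the visits of the past of `ω` to the good set.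
The transition probabilities from `Xs ω` to `Xs (θ ω)` are given by kernels on the ambient
space `𝒳` which, started in `Xs ω`, are carried by `Xs (θ ω)`; their values outside `Xs ω`
play no role. The negative powers `θ^{-k}` are the iterates of `θ.symm`. -/
theorem random_geometric_ergodicity_hits
    {Ω 𝒳 : Type*} [MeasurableSpace Ω] [MeasurableSpace 𝒳]
    (Pr : Measure Ω) [IsProbabilityMeasure Pr]
    (θ : Ω ≃ᵐ Ω) (hθ : MeasurePreserving θ Pr Pr) (hmix : StrongMixing Pr θ)
    (Xs : Ω → Set 𝒳) (hXs : MeasurableSet {p : Ω × 𝒳 | p.2 ∈ Xs p.1})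
    (P : Ω → Kernel 𝒳 𝒳) (hPMarkov : ∀ ω, IsMarkovKernel (P ω))
    (hPmeas : ∀ (x : 𝒳) (Γ : Set 𝒳), MeasurableSet Γ → Measurable fun ω => P ω x Γ)
    (hPfib : ∀ᵐ ω ∂Pr, ∀ x ∈ Xs ω, P ω x (Xs (θ ω)) = 1)
    (N : Ω → ℕ) (hN : Measurable N)
    (γ : Ω → ℝ) (hγ : Measurable γ) (hγ01 : ∀ ω, γ ω ∈ Set.Ioo (0 : ℝ) 1)
    (m : Ω → Measure 𝒳) (hm : ∀ ω, IsProbabilityMeasure (m ω))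
    (hm_supp : ∀ᵐ ω ∂Pr, m ω (Xs ω) = 1)
    (hDoeb : ∀ᵐ ω ∂Pr, ∀ x ∈ Xs (θ.symm^[N ω] ω), ∀ Γ : Set 𝒳, MeasurableSet Γ → Γ ⊆ Xs ω →
      ENNReal.ofReal (γ ω) * m ω Γ ≤ envKernel θ P (N ω) (θ.symm^[N ω] ω) x Γ)
    (δ : ℝ) (hδ : 0 < δ) (M : ℕ) (hM : 1 ≤ M)
    (hA : 0 < Pr (goodSet γ N δ M)) :
    ∀ᵐ ω ∂Pr, ∃ μ : Measure 𝒳, IsProbabilityMeasure μ ∧ μ (Xs ω) = 1 ∧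
      ∀ n : ℕ, ∀ x ∈ Xs (θ.symm^[n] ω), ∀ Γ : Set 𝒳, MeasurableSet Γ → Γ ⊆ Xs ω →
        |(envKernel θ P n (θ.symm^[n] ω) x Γ).toReal - (μ Γ).toReal|
          ≤ (1 - δ) ^ (∑ j ∈ Finset.Icc 1 (n / M - 1),
              (goodSet γ N δ M).indicator (fun _ => (1 : ℕ)) (θ.symm^[j * M] ω)) :=
  (random_geometric_ergodicity_hits_general Pr θ hθ M (Nat.one_le_iff_ne_zero.1 hM)
    (hmix.ergodic_iterate hθ (Nat.one_le_iff_ne_zero.1 hM)) Xs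
    (fun _ => measurable_prodMk_left hXs) P hPMarkov hPfib N hN γ hγ m hm hm_supp hDoeb δ hδ
    hA).mono fun _ ⟨μ, hμ, hX, hb⟩ => ⟨μ, hμ, hX, fun n x hx Γ hΓ _ => hb n x hx Γ hΓ⟩
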